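/- Let X be a finite set, d ≥ -1, and let G ≤ P_d(X) be a finitely generated subgroup. Then every connected component of the Schreier graph of the action of G on X^ω is amenable. -/

import Mathlib

/-! The rooted tree `X^*` of finite words over a fixed alphabet `X`, realized via its
boundary `X^ω = ℕ → X`; automorphisms, restrictions, self-similar and contracting groups. -/

/-- A permutation of the boundary `X^ω = ℕ → X` is (induced by) an automorphism of the
rooted tree `X^*` iff for all `n` it preserves the relation "agree on the first `n`
letters" (two sequences have the same length-`n` beginning iff their images do). -/
def IsTreeAut {X : Type*} (f : Equiv.Perm (ℕ → X)) : Prop :=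
  ∀ (n : ℕ) (w w' : ℕ → X),
    (∀ i, i < n → w i = w' i) ↔ (∀ i, i < n → f w i = f w' i)

/-- The automorphism group `Aut X^*` of the rooted tree `X^*`, realized as the group of
those permutations of the boundary `X^ω` induced by tree automorphisms. -/
def treeAut (X : Type*) : Subgroup (Equiv.Perm (ℕ → X)) where
  carrier := {f | IsTreeAut f}
  one_mem' := by intro n w w'; simp
  mul_mem' := by
    intro f g hf hg n w w'
    have h := (hg n w w').trans (hf n (g w) (g w'))
    simpa using h
  inv_mem' := by
    intro f hf n w w'
    have h := (hf n (f⁻¹ w) (f⁻¹ w')).symm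
    simpa using h

/-- The concatenation `v·u ∈ X^ω` of a finite word `v ∈ X^m` and a sequence `u ∈ X^ω`. -/
def wappend {X : Type*} {m : ℕ} (v : Fin m → X) (u : ℕ → X) : ℕ → X :=
  fun i => if h : i < m then v ⟨i, h⟩ else u (i - m)

/-- The underlying function of the restriction `f|_v`: it sends `u` to the sequence with
`v·u ↦ (f v)·(f|_v u)`, i.e. `(f|_v u) j` is letter `m + j` of `f (v·u)`. -/
def restrictFun {X : Type*} (f : Equiv.Perm (ℕ → X)) {m : ℕ} (v : Fin m → X) :
    (ℕ → X) → (ℕ → X) :=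
  fun u j => f (wappend v u) (m + j)

open scoped Classical in
/-- The restriction (section, state) `f|_v` of `f` at the vertex `v ∈ X^*`: the unique
automorphism of `X^*` with `f (v·u) = (f v)·(f|_v u)` for all `u`.  (For `f` a tree
automorphism the underlying function `restrictFun f v` is bijective, and `f|_v` is the
corresponding permutation of the boundary.) -/
noncomputable def restrictPerm {X : Type*} (f : Equiv.Perm (ℕ → X)) {m : ℕ}
    (v : Fin m → X) : Equiv.Perm (ℕ → X) :=
  if h : Function.Bijective (restrictFun f v) then Equiv.ofBijective _ h else 1

/-- A group `G` of permutations of the boundary is self-similar if it is closed under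
taking restrictions. -/
def SelfSimilar {X : Type*} (G : Subgroup (Equiv.Perm (ℕ → X))) : Prop :=
  ∀ g ∈ G, ∀ (m : ℕ) (v : Fin m → X), restrictPerm g v ∈ G

/-- The (self-similar) group `G` is contracting with the finite set `N ⊆ G`: for every
`g ∈ G` there is `n` such that `g|_v ∈ N` for all words `v` of length greater than `n`. -/
def IsContractingWith {X : Type*} (G : Subgroup (Equiv.Perm (ℕ → X)))
    (N : Finset (Equiv.Perm (ℕ → X))) : Prop :=
  (N : Set (Equiv.Perm (ℕ → X))) ⊆ (G : Set (Equiv.Perm (ℕ → X))) ∧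
    ∀ g ∈ G, ∃ n : ℕ, ∀ (m : ℕ) (v : Fin m → X), n < m → restrictPerm g v ∈ N

/-- The restriction `f|_v` is trivial: `f` maps `v·u` to `(f v)·u` for every `u`. -/
def RestrictTrivial {X : Type*} (f : Equiv.Perm (ℕ → X)) {m : ℕ} (v : Fin m → X) : Prop :=
  ∀ u : ℕ → X, (∀ i : Fin m, u i = v i) → ∀ i, m ≤ i → f u i = u i

/-- The growth function `θ_f(n) = |{v ∈ X^n : f|_v ≠ id}|` of `f`. -/
noncomputable def thetaGrowth {X : Type*} (f : Equiv.Perm (ℕ → X)) (n : ℕ) : ℕ :=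
  {v : Fin n → X | ¬ RestrictTrivial f v}.ncard

/-- `f` is finite-state: it has only finitely many restrictions `f|_v`, `v ∈ X^*`. -/
def FiniteState {X : Type*} (f : Equiv.Perm (ℕ → X)) : Prop :=
  {h : Equiv.Perm (ℕ → X) | ∃ (m : ℕ) (v : Fin m → X), restrictPerm f v = h}.Finite

/-- `f` is finitary: for some `n`, `f|_v = id` for all words `v` of length `n`. -/
def IsFinitary {X : Type*} (f : Equiv.Perm (ℕ → X)) : Prop :=
  ∃ n : ℕ, ∀ u : ℕ → X, ∀ i, n ≤ i → f u i = u i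

/-- Membership in Sidki's group `P_d(X)`, for `d ≥ -1`: for `d = -1`, the finitary
automorphisms of `X^*`; for `d ≥ 0`, the finite-state automorphisms of `X^*` whose growth
function `θ` is bounded above by a polynomial of degree `d`. -/
def MemP {X : Type*} (d : ℤ) (f : Equiv.Perm (ℕ → X)) : Prop :=
  IsTreeAut f ∧
    ((d = -1 ∧ IsFinitary f) ∨
      (0 ≤ d ∧ FiniteState f ∧
        ∃ p : Polynomial ℕ, (p.natDegree : ℤ) ≤ d ∧ ∀ n, thetaGrowth f n ≤ p.eval n))

/-- The set `Σ_f` of `f`-singular points of `X^ω`: points none of whose beginnings `v`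
satisfy `f|_v = id`. -/
def singularSet {X : Type*} (f : Equiv.Perm (ℕ → X)) : Set (ℕ → X) :=
  {w | ∀ m : ℕ, ¬ RestrictTrivial f (fun i : Fin m => w i)}

/-!
A nontrivial state of an automorphism of polynomial growth recurs along at most one sequence:
concatenating two distinct return words of equal length would produce exponential growth. Every
singular point of a finite-state automorphism is, after finitely many letters, a sequence along
which some nontrivial state recurs, so an element of `P_d(X)` has only countably many singular
points.

Let `Γ` be an infinite orbit and `s` a generator. The cylinder of a long word contains an
arbitrarily small proportion of the beginnings of length `n` of points of `Γ`, uniformly in `n`.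
Surround the countably many singular points of `s` by cylinders of summable small proportions. By
compactness, finitely many of them contain all words of length `n` with nontrivial restriction of
`s`, for large `n`, so the proportion of these words tends to zero. The remaining edges of the
`n`-th level keep the tail fixed, which lifts a suitable set of words of length `n` to a Følner
set in `Γ`.
-/

open Filter Asymptotics

section Words

variable {X : Type*} {m n : ℕ}

/-- The beginning of length `n` of a sequence, as an element of `X^n`. -/
def wtake (n : ℕ) (x : ℕ → X) : Fin n → X := fun i => x i

/-- The tail of a sequence after its first `n` letters. -/
def wdrop (n : ℕ) (x : ℕ → X) : ℕ → X := fun i => x (n + i)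

lemma wtake_eq_wtake_iff {x y : ℕ → X} : wtake n x = wtake n y ↔ ∀ i, i < n → x i = y i :=
  ⟨fun h i hi => congrFun h ⟨i, hi⟩, fun h => funext fun i => h i i.2⟩

lemma wtake_eq_wtake_of_le (hmn : m ≤ n) {x y : ℕ → X} (h : wtake n x = wtake n y) :
    wtake m x = wtake m y :=
  wtake_eq_wtake_iff.2 fun i hi => wtake_eq_wtake_iff.1 h i (hi.trans_le hmn)

lemma wtake_wappend (v : Fin n → X) (u : ℕ → X) : wtake n (wappend v u) = v := by
  funext i
  simp [wtake, wappend]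

lemma wdrop_wappend (v : Fin n → X) (u : ℕ → X) : wdrop n (wappend v u) = u := by
  funext i
  simp [wdrop, wappend]

lemma wappend_wtake_wdrop (n : ℕ) (x : ℕ → X) : wappend (wtake n x) (wdrop n x) = x := by
  funext i
  by_cases hi : i < n
  · simp [wappend, wtake, hi]
  · simp [wappend, wdrop, hi, Nat.add_sub_cancel' (not_lt.1 hi)]

lemma wappend_inj {v v' : Fin n → X} {u u' : ℕ → X} :
    wappend v u = wappend v' u' ↔ v = v' ∧ u = u' := by
  refine ⟨fun h => ⟨?_, ?_⟩, by rintro ⟨rfl, rfl⟩; rfl⟩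
  · simpa only [wtake_wappend] using congrArg (wtake n) h
  · simpa only [wdrop_wappend] using congrArg (wdrop n) h

lemma wtake_add (m n : ℕ) (x : ℕ → X) :
    wtake (m + n) x = Fin.append (wtake m x) (wtake n (wdrop m x)) := by
  funext i
  refine Fin.addCases (fun i => ?_) (fun i => ?_) i <;> simp [wtake, wdrop]

lemma wappend_append (v : Fin m → X) (v' : Fin n → X) (u : ℕ → X) :
    wappend (Fin.append v v') u = wappend v (wappend v' u) := by
  set x := wappend v (wappend v' u) with hx
  have htake : wtake (m + n) x = Fin.append v v' := by
    rw [wtake_add, hx, wtake_wappend, wdrop_wappend, wtake_wappend]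
  have hdrop : wdrop (m + n) x = wdrop n (wdrop m x) := by
    funext i
    simp only [wdrop, add_assoc]
  rw [← wappend_wtake_wdrop (m + n) x, htake, hdrop, hx, wdrop_wappend, wdrop_wappend]

lemma append_inj {v v' : Fin m → X} {u u' : Fin n → X} :
    Fin.append v u = Fin.append v' u' ↔ v = v' ∧ u = u' :=
  (Fin.appendEquiv m n).injective.eq_iff (a := (v, u)) (b := (v', u')).trans Prod.mk_inj

/-- The image `f(v)` of a word `v` under the tree automorphism `f`. It may be read off from
`f (v·u)` for any sequence `u`; taking a letter of `v` for `u` avoids assuming `X` nonempty. -/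
def wordMap (f : Equiv.Perm (ℕ → X)) (v : Fin n → X) : Fin n → X :=
  fun i => f (wappend v fun _ => v i) i

end Words

section Restrictions

variable {X : Type*} {m n : ℕ} {f : Equiv.Perm (ℕ → X)}

namespace IsTreeAut

lemma wtake_apply_eq_iff (hf : IsTreeAut f) {x y : ℕ → X} :
    wtake n (f x) = wtake n (f y) ↔ wtake n x = wtake n y := by
  simpa only [wtake_eq_wtake_iff] using (hf n x y).symm

lemma wtake_apply (hf : IsTreeAut f) (x : ℕ → X) : wtake n (f x) = wordMap f (wtake n x) := by
  funext i
  exact congrFun (hf.wtake_apply_eq_iff.2 (wtake_wappend (wtake n x) _).symm) i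

lemma wordMap_injective (hf : IsTreeAut f) :
    Function.Injective (wordMap f : (Fin n → X) → Fin n → X) := by
  intro v v' h
  rcases n.eq_zero_or_pos with rfl | hn
  · exact Subsingleton.elim _ _
  · let u : ℕ → X := fun _ => v ⟨0, hn⟩
    rwa [← wtake_wappend v u, ← wtake_wappend v' u, ← hf.wtake_apply, ← hf.wtake_apply,
      hf.wtake_apply_eq_iff, wtake_wappend, wtake_wappend] at h

lemma apply_wappend_eq_restrictFun (hf : IsTreeAut f) (v : Fin m → X) (u : ℕ → X) :
    f (wappend v u) = wappend (wordMap f v) (restrictFun f v u) := by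
  conv_lhs => rw [← wappend_wtake_wdrop m (f (wappend v u)), hf.wtake_apply, wtake_wappend]
  rfl

lemma restrictFun_bijective (hf : IsTreeAut f) (v : Fin m → X) :
    Function.Bijective (restrictFun f v) := by
  constructor
  · intro u u' h
    have happ : f (wappend v u) = f (wappend v u') := by
      rw [hf.apply_wappend_eq_restrictFun, hf.apply_wappend_eq_restrictFun, h]
    exact (wappend_inj.1 (f.injective happ)).2
  · intro y
    obtain ⟨z, hz⟩ := f.surjective (wappend (wordMap f v) y)
    have hzv : wtake m z = v :=
      hf.wordMap_injective (by rw [← hf.wtake_apply, hz, wtake_wappend])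
    rw [← wappend_wtake_wdrop m z, hzv, hf.apply_wappend_eq_restrictFun] at hz
    exact ⟨wdrop m z, (wappend_inj.1 hz).2⟩

lemma apply_wappend (hf : IsTreeAut f) (v : Fin m → X) (u : ℕ → X) :
    f (wappend v u) = wappend (wordMap f v) (restrictPerm f v u) := by
  rw [hf.apply_wappend_eq_restrictFun, restrictPerm, dif_pos (hf.restrictFun_bijective v)]
  rfl

lemma restrictPerm_apply (hf : IsTreeAut f) (v : Fin m → X) (u : ℕ → X) :
    restrictPerm f v u = wdrop m (f (wappend v u)) := by
  rw [hf.apply_wappend, wdrop_wappend]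

lemma restrict (hf : IsTreeAut f) (v : Fin m → X) : IsTreeAut (restrictPerm f v) := by
  intro n x y
  have h := hf.wtake_apply_eq_iff (n := m + n) (x := wappend v x) (y := wappend v y)
  simpa only [wtake_add, append_inj, hf.apply_wappend, wtake_wappend, wdrop_wappend, true_and,
    wtake_eq_wtake_iff] using h.symm

lemma restrictPerm_append (hf : IsTreeAut f) (v : Fin m → X) (v' : Fin n → X) :
    restrictPerm f (Fin.append v v') =
      restrictPerm (restrictPerm f v) v' := by
  ext1 u
  rw [hf.restrictPerm_apply, (hf.restrict v).restrictPerm_apply, hf.restrictPerm_apply,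
    wappend_append]
  funext i
  simp only [wdrop, add_assoc]

lemma restrictPerm_wtake_add (hf : IsTreeAut f) (m n : ℕ) (x : ℕ → X) :
    restrictPerm f (wtake (m + n) x) =
      restrictPerm (restrictPerm f (wtake m x)) (wtake n (wdrop m x)) := by
  rw [wtake_add, hf.restrictPerm_append]

lemma restrictTrivial_iff (hf : IsTreeAut f) (v : Fin m → X) :
    RestrictTrivial f v ↔ restrictPerm f v = 1 := by
  constructor
  · intro h
    ext1 u
    rw [hf.restrictPerm_apply]
    funext i
    rw [wdrop, h _ (fun j => congrFun (wtake_wappend v u) j) _ (Nat.le_add_right m i)]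
    exact congrFun (wdrop_wappend v u) i
  · intro h u hu i hi
    have hv : wtake m u = v := funext hu
    have htail : wdrop m (f u) = wdrop m u := by
      conv_lhs => rw [← wappend_wtake_wdrop m u, hv, ← hf.restrictPerm_apply, h]
      rfl
    simpa only [wdrop, Nat.add_sub_cancel' hi] using congrFun htail (i - m)

end IsTreeAut

lemma RestrictTrivial.apply_wappend (hf : IsTreeAut f) {v : Fin n → X}
    (h : RestrictTrivial f v) (u : ℕ → X) : f (wappend v u) = wappend (wordMap f v) u := by
  rw [hf.apply_wappend, (hf.restrictTrivial_iff v).1 h, Equiv.Perm.one_apply]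

lemma RestrictTrivial.wtake_of_le (hmn : m ≤ n) {x : ℕ → X}
    (h : RestrictTrivial f (wtake m x)) : RestrictTrivial f (wtake n x) :=
  fun u hu i hi => h u (fun j => hu ⟨j, j.2.trans_le hmn⟩) i (hmn.trans hi)

end Restrictions

section Growth

variable {X : Type*} {m n : ℕ} {f t : Equiv.Perm (ℕ → X)}

lemma thetaGrowth_zero_pos (hf : f ≠ 1) : 0 < thetaGrowth f 0 := by
  refine (Set.ncard_pos (Set.toFinite _)).2 ⟨Fin.elim0, fun h => hf ?_⟩
  ext1 u
  funext i
  exact h u (fun j => j.elim0) i i.zero_le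

lemma IsTreeAut.thetaGrowth_add [Fintype X] (hf : IsTreeAut f) (m n : ℕ) :
    thetaGrowth f (m + n) = ∑ v : Fin m → X, thetaGrowth (restrictPerm f v) n := by
  have hiff (v : Fin m → X) (u : Fin n → X) :
      ¬ RestrictTrivial (restrictPerm f v) u ↔ ¬ RestrictTrivial f (Fin.append v u) := by
    rw [hf.restrictTrivial_iff, (hf.restrict v).restrictTrivial_iff, hf.restrictPerm_append]
  simp only [thetaGrowth, ← Nat.card_coe_set_eq]
  rw [← Nat.card_sigma]
  exact Nat.card_congr (((Fin.appendEquiv m n).subtypeEquiv fun w => hiff w.1 w.2).symm.trans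
    (Equiv.subtypeProdEquivSigmaSubtype
      fun v u => ¬ RestrictTrivial (restrictPerm f v) u))

/-- The growth function of `f` is bounded above by a polynomial. -/
def HasPolynomialGrowth (f : Equiv.Perm (ℕ → X)) : Prop :=
  ∃ p : Polynomial ℕ, ∀ n, thetaGrowth f n ≤ p.eval n

lemma HasPolynomialGrowth.restrict [Finite X] (hf : IsTreeAut f)
    (h : HasPolynomialGrowth f) (v : Fin m → X) :
    HasPolynomialGrowth (restrictPerm f v) := by
  cases nonempty_fintype X
  obtain ⟨p, hp⟩ := h
  refine ⟨p.comp (Polynomial.C m + Polynomial.X), fun n => ?_⟩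
  calc thetaGrowth (restrictPerm f v) n
      ≤ ∑ v : Fin m → X, thetaGrowth (restrictPerm f v) n :=
        Finset.single_le_sum (f := fun v => thetaGrowth (restrictPerm f v) n)
          (fun _ _ => Nat.zero_le _) (Finset.mem_univ v)
    _ = thetaGrowth f (m + n) := (hf.thetaGrowth_add m n).symm
    _ ≤ p.eval (m + n) := hp _
    _ = (p.comp (Polynomial.C m + Polynomial.X)).eval n := by simp [Polynomial.eval_comp]

lemma polynomial_eval_isLittleO_const_pow (p : Polynomial ℝ) {r : ℝ} (hr : 1 < r) :
    (fun k : ℕ => p.eval (k : ℝ)) =o[atTop] fun k : ℕ => r ^ k := by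
  simp only [Polynomial.eval_eq_sum_range]
  exact IsLittleO.fun_sum fun i _ =>
    (isLittleO_pow_const_const_pow_of_one_lt i hr).const_mul_left _

lemma exists_polynomial_eval_lt_two_pow (p : Polynomial ℕ) : ∃ k : ℕ, p.eval k < 2 ^ k := by
  have hlittle := polynomial_eval_isLittleO_const_pow (p.map (Nat.castRingHom ℝ)) one_lt_two
  obtain ⟨k, hk⟩ := (hlittle.def one_half_pos).exists
  refine ⟨k, ?_⟩
  rw [Polynomial.eval_natCast_map, eq_natCast, Nat.cast_id, Real.norm_natCast, norm_pow,
    Real.norm_two] at hk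
  have : ((p.eval k : ℕ) : ℝ) < 2 ^ k := by linarith [pow_pos (zero_lt_two' ℝ) k]
  exact_mod_cast this

lemma two_pow_le_thetaGrowth [Finite X] (ht : IsTreeAut t) (ht1 : t ≠ 1) {u u' : Fin m → X}
    (huu' : u ≠ u') (hu : restrictPerm t u = t) (hu' : restrictPerm t u' = t) (k : ℕ) :
    2 ^ k ≤ thetaGrowth t (k * m) := by
  classical
  cases nonempty_fintype X
  induction k with
  | zero => simpa using Nat.one_le_iff_ne_zero.2 (thetaGrowth_zero_pos ht1).ne'
  | succ k ih =>
    calc 2 ^ (k + 1) ≤ thetaGrowth t (k * m) + thetaGrowth t (k * m) := by omega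
      _ = ∑ v ∈ {u, u'}, thetaGrowth (restrictPerm t v) (k * m) := by
        rw [Finset.sum_pair huu', hu, hu']
      _ ≤ ∑ v : Fin m → X, thetaGrowth (restrictPerm t v) (k * m) :=
        Finset.sum_le_sum_of_subset (Finset.subset_univ _)
      _ = thetaGrowth t ((k + 1) * m) := by rw [← ht.thetaGrowth_add, Nat.succ_mul, add_comm]

lemma HasPolynomialGrowth.eq_of_restrictPerm_eq_self [Finite X] (h : HasPolynomialGrowth t)
    (ht : IsTreeAut t) (ht1 : t ≠ 1) {u u' : Fin m → X} (hu : restrictPerm t u = t)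
    (hu' : restrictPerm t u' = t) : u = u' := by
  by_contra huu'
  obtain ⟨p, hp⟩ := h
  obtain ⟨k, hk⟩ := exists_polynomial_eval_lt_two_pow (p.comp (Polynomial.X * Polynomial.C m))
  refine hk.not_ge ((two_pow_le_thetaGrowth ht ht1 huu' hu hu' k).trans ((hp _).trans_eq ?_))
  simp [Polynomial.eval_comp]

end Growth

section Singular

variable {X : Type*} {f t : Equiv.Perm (ℕ → X)}

/-- The state `t` recurs along `x`: `t|_v = t` for infinitely many beginnings `v` of `x`. -/
def RecursAlong (t : Equiv.Perm (ℕ → X)) (x : ℕ → X) : Prop :=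
  ∃ᶠ n in atTop, restrictPerm t (wtake n x) = t

/-- The concatenations of a return word along `x` with one along `y`, in the two orders, are return
words of equal length, hence equal; so `x` and `y` agree as far as both return words reach. -/
lemma RecursAlong.eq [Finite X] {x y : ℕ → X} (hx : RecursAlong t x) (hy : RecursAlong t y)
    (ht : IsTreeAut t) (ht1 : t ≠ 1) (hgrowth : HasPolynomialGrowth t) : x = y := by
  funext j
  obtain ⟨m, hm, hxm⟩ := hx.forall_exists_of_atTop (j + 1)
  obtain ⟨n, hn, hyn⟩ := hy.forall_exists_of_atTop (j + 1)
  have hreturn {k l : ℕ} {z z' : ℕ → X} (hz : restrictPerm t (wtake k z) = t)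
      (hz' : restrictPerm t (wtake l z') = t) :
      restrictPerm t (wtake (k + l) (wappend (wtake k z) z')) = t := by
    rw [ht.restrictPerm_wtake_add, wtake_wappend, wdrop_wappend, hz, hz']
  have heq : wtake (m + n) (wappend (wtake m x) y) = wtake (m + n) (wappend (wtake n y) x) :=
    hgrowth.eq_of_restrictPerm_eq_self ht ht1 (hreturn hxm hyn)
      (add_comm m n ▸ hreturn hyn hxm)
  have hmj : j < m := hm
  have hnj : j < n := hn
  simpa [wappend, wtake, hmj, hnj] using wtake_eq_wtake_iff.1 heq j (by omega)

lemma exists_frequently_eq_of_finite {α β : Type*} {l : Filter α} [l.NeBot] {s : Set β}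
    (hs : s.Finite) {g : α → β} (hg : ∀ a, g a ∈ s) : ∃ b, ∃ᶠ a in l, g a = b := by
  by_contra! h
  obtain ⟨a, ha⟩ := ((eventually_all_finite hs).2 fun b _ => h b).exists
  exact ha _ (hg a) rfl

lemma exists_recursAlong_of_mem_singularSet (hf : IsTreeAut f) (hfs : FiniteState f)
    {x : ℕ → X} (hx : x ∈ singularSet f) :
    ∃ n, restrictPerm f (wtake n x) ≠ 1 ∧ RecursAlong (restrictPerm f (wtake n x)) (wdrop n x) := by
  obtain ⟨t, ht⟩ := exists_frequently_eq_of_finite (l := atTop) hfs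
    fun n => ⟨n, wtake n x, rfl⟩
  obtain ⟨n, rfl⟩ := ht.exists
  refine ⟨n, (hf.restrictTrivial_iff _).not.1 (hx n), frequently_atTop.2 fun a => ?_⟩
  obtain ⟨k, hk, hreturn⟩ := ht.forall_exists_of_atTop (n + a)
  obtain ⟨b, rfl⟩ := Nat.exists_eq_add_of_le (le_of_add_le_left hk)
  exact ⟨b, by omega, by rw [← hf.restrictPerm_wtake_add, hreturn]⟩

lemma countable_singularSet_of_hasPolynomialGrowth [Finite X] (hf : IsTreeAut f)
    (hfs : FiniteState f) (hgrowth : HasPolynomialGrowth f) : (singularSet f).Countable := by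
  let recurring {n : ℕ} (v : Fin n → X) : Set (ℕ → X) :=
    {y | restrictPerm f v ≠ 1 ∧ RecursAlong (restrictPerm f v) y}
  have hrecurring {n : ℕ} (v : Fin n → X) : (recurring v).Subsingleton :=
    fun _ hx _ hy => hx.2.eq hy.2 (hf.restrict v) hx.1 (hgrowth.restrict hf v)
  have hcover : singularSet f ⊆ ⋃ (n : ℕ) (v : Fin n → X), wappend v '' recurring v := by
    intro x hx
    obtain ⟨n, hn⟩ := exists_recursAlong_of_mem_singularSet hf hfs hx
    exact Set.mem_iUnion₂.2 ⟨n, wtake n x, wdrop n x, hn, wappend_wtake_wdrop n x⟩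
  exact Set.Countable.mono hcover <| Set.countable_iUnion fun n =>
    Set.countable_iUnion fun v => ((hrecurring v).image _).countable

lemma IsFinitary.singularSet_eq_empty (hf : IsFinitary f) : singularSet f = ∅ := by
  obtain ⟨n, hn⟩ := hf
  exact Set.eq_empty_of_forall_notMem fun x hx => hx n fun u _ => hn u

lemma MemP.countable_singularSet [Finite X] {d : ℤ} (hf : MemP d f) :
    (singularSet f).Countable := by
  obtain ⟨htree, ⟨-, hfin⟩ | ⟨-, hfs, p, -, hp⟩⟩ := hf
  · simp [hfin.singularSet_eq_empty]
  · exact countable_singularSet_of_hasPolynomialGrowth htree hfs ⟨p, hp⟩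

end Singular

section Compactness

variable {X : Type*}

lemma exists_finset_forall_wtake_eq [Finite X] (N : (ℕ → X) → ℕ) :
    ∃ t : Finset (ℕ → X), ∀ x, ∃ y ∈ t, wtake (N y) x = wtake (N y) y := by
  let _ : TopologicalSpace X := ⊥
  have : DiscreteTopology X := ⟨rfl⟩
  obtain ⟨t, -, ht⟩ := isCompact_univ.elim_nhds_subcover (fun y => PiNat.cylinder y (N y))
    fun y _ => (PiNat.isOpen_cylinder (fun _ => X) y (N y)).mem_nhds (PiNat.self_mem_cylinder y _)
  refine ⟨t, fun x => ?_⟩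
  obtain ⟨y, hy, hxy⟩ := Set.mem_iUnion₂.1 (ht (Set.mem_univ x))
  exact ⟨y, hy, wtake_eq_wtake_iff.2 hxy⟩

lemma exists_finset_eventually_wtake_eq_of_not_restrictTrivial [Finite X]
    (f : Equiv.Perm (ℕ → X)) (N : (ℕ → X) → ℕ) :
    ∃ t : Finset (ℕ → X), (t : Set (ℕ → X)) ⊆ singularSet f ∧ ∀ᶠ n in atTop, ∀ x,
      ¬ RestrictTrivial f (wtake n x) → ∃ z ∈ t, wtake (N z) x = wtake (N z) z := by
  classical
  have hregular (y : ℕ → X) : ∃ n, y ∉ singularSet f → RestrictTrivial f (wtake n y) := by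
    by_cases hy : y ∈ singularSet f
    · exact ⟨0, fun h => absurd hy h⟩
    · obtain ⟨n, hn⟩ := not_forall_not.1 hy
      exact ⟨n, fun _ => hn⟩
  choose M hM using hregular
  obtain ⟨t, ht⟩ := exists_finset_forall_wtake_eq
    fun y => if y ∈ singularSet f then N y else M y
  refine ⟨t.filter (· ∈ singularSet f), fun _ hy => (Finset.mem_filter.1 hy).2, ?_⟩
  filter_upwards [(eventually_all_finset t).2 fun y _ => eventually_ge_atTop (M y)]
    with n hn x hx
  obtain ⟨y, hyt, hxy⟩ := ht x
  have hy : y ∈ singularSet f := by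
    by_contra hy
    rw [if_neg hy] at hxy
    exact hx (RestrictTrivial.wtake_of_le (hn y hyt) (hxy ▸ hM y hy))
  rw [if_pos hy] at hxy
  exact ⟨y, Finset.mem_filter.2 ⟨hyt, hy⟩, hxy⟩

end Compactness

section Density

variable {X : Type*} {f : Equiv.Perm (ℕ → X)} {G : Subgroup (Equiv.Perm (ℕ → X))}

lemma eventually_injOn_wtake {A : Set (ℕ → X)} (hA : A.Finite) :
    ∀ᶠ n in atTop, Set.InjOn (wtake n) A := by
  refine (eventually_all_finite hA).2 fun x _ => (eventually_all_finite hA).2 fun y _ => ?_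
  by_cases hxy : x = y
  · exact Eventually.of_forall fun _ _ => hxy
  · obtain ⟨i, hi⟩ := Function.ne_iff.1 hxy
    filter_upwards [eventually_gt_atTop i] with n hn h
    exact absurd (wtake_eq_wtake_iff.1 h i hn) hi

lemma tendsto_ncard_image_wtake [Finite X] {Γ : Set (ℕ → X)} (hΓ : Γ.Infinite) :
    Tendsto (fun n => (wtake n '' Γ).ncard) atTop atTop := by
  refine tendsto_atTop.2 fun k => ?_
  obtain ⟨A, hAΓ, rfl⟩ := hΓ.exists_subset_card_eq k
  filter_upwards [eventually_injOn_wtake A.finite_toSet] with n hn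
  rw [← Set.ncard_coe_finset, ← hn.ncard_image]
  exact Set.ncard_le_ncard (Set.image_mono hAΓ)

/-- `G` permutes the beginnings of length `m` of the points of an orbit transitively, so the fibres
of the projection from level `n` to level `m` have equal size, namely the average one. -/
lemma ncard_image_wtake_orbit_mul_ncard_fiber_le [Finite X] (hG : G ≤ treeAut X) (w : ℕ → X)
    {m n : ℕ} (hmn : m ≤ n) (u : Fin m → X) :
    (wtake m '' MulAction.orbit G w).ncard *
        (wtake n '' {x ∈ MulAction.orbit G w | wtake m x = u}).ncard ≤
      (wtake n '' MulAction.orbit G w).ncard := by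
  set Γ := MulAction.orbit G w
  rcases {x ∈ Γ | wtake m x = u}.eq_empty_or_nonempty with hempty | ⟨z, hzΓ, rfl⟩
  · simp [hempty]
  have htree (g : G) : IsTreeAut (g : Equiv.Perm (ℕ → X)) := hG g.2
  have htrans : ∀ v ∈ wtake m '' Γ, ∃ g : G, wtake m (g • z) = v := by
    rintro _ ⟨x, hx, rfl⟩
    obtain ⟨g, rfl⟩ : x ∈ MulAction.orbit G z := (MulAction.orbit_eq_iff.2 hzΓ).ge hx
    exact ⟨g, rfl⟩
  choose! g hg using htrans
  have hmoved {v : Fin m → X} (hv : v ∈ wtake m '' Γ) {x : ℕ → X} (hx : wtake m x = wtake m z) :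
      wtake m (g v • x) = v :=
    ((htree (g v)).wtake_apply_eq_iff.2 hx).trans (hg v hv)
  rw [← Set.ncard_prod]
  refine Set.ncard_le_ncard_of_injOn (fun p => wordMap (g p.1 : Equiv.Perm (ℕ → X)) p.2) ?_ ?_
  · rintro ⟨v, _⟩ ⟨-, x, ⟨hxΓ, -⟩, rfl⟩
    exact ⟨g v • x, MulAction.mem_orbit_of_mem_orbit _ hxΓ, (htree (g v)).wtake_apply x⟩
  · rintro ⟨v, _⟩ ⟨hv, x, ⟨-, hx⟩, rfl⟩ ⟨v', _⟩ ⟨hv', x', ⟨-, hx'⟩, rfl⟩ h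
    have hlevel : wtake n (g v • x) = wtake n (g v' • x') :=
      ((htree (g v)).wtake_apply x).trans (h.trans ((htree (g v')).wtake_apply x').symm)
    obtain rfl : v = v' :=
      (hmoved hv hx).symm.trans ((wtake_eq_wtake_of_le hmn hlevel).trans (hmoved hv' hx'))
    exact Prod.ext rfl ((htree (g v)).wtake_apply_eq_iff.1 hlevel)

lemma exists_forall_ncard_fiber_le [Finite X] (hG : G ≤ treeAut X) {w : ℕ → X}
    (hinf : (MulAction.orbit G w).Infinite) {δ : ℝ} (hδ : 0 < δ) :
    ∃ m, ∀ n ≥ m, ∀ u : Fin m → X,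
      ((wtake n '' {x ∈ MulAction.orbit G w | wtake m x = u}).ncard : ℝ) ≤
        δ * (wtake n '' MulAction.orbit G w).ncard := by
  obtain ⟨m, hm⟩ : ∃ m, δ⁻¹ ≤ ((wtake m '' MulAction.orbit G w).ncard : ℝ) :=
    ((tendsto_natCast_atTop_atTop.comp
      (tendsto_ncard_image_wtake hinf)).eventually_ge_atTop _).exists
  refine ⟨m, fun n hmn u => ?_⟩
  rw [← inv_mul_le_iff₀ hδ]
  refine (mul_le_mul_of_nonneg_right hm (Nat.cast_nonneg _)).trans ?_
  exact_mod_cast ncard_image_wtake_orbit_mul_ncard_fiber_le hG w hmn u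

/-- The words of length `n` at which `f` has a nontrivial restriction, among the beginnings of
points of `Γ`. -/
def singularWords (f : Equiv.Perm (ℕ → X)) (Γ : Set (ℕ → X)) (n : ℕ) : Set (Fin n → X) :=
  {v ∈ wtake n '' Γ | ¬ RestrictTrivial f v}

lemma isLittleO_ncard_singularWords_orbit [Finite X] (hG : G ≤ treeAut X) {w : ℕ → X}
    (hinf : (MulAction.orbit G w).Infinite) (hf : (singularSet f).Countable) :
    (fun n => ((singularWords f (MulAction.orbit G w) n).ncard : ℝ)) =o[atTop]
      fun n => ((wtake n '' MulAction.orbit G w).ncard : ℝ) := by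
  refine isLittleO_iff.2 fun δ hδ => ?_
  set Γ := MulAction.orbit G w
  obtain ⟨η, hη, hηδ⟩ := hf.exists_pos_forall_sum_le hδ
  choose N hN using fun z => exists_forall_ncard_fiber_le hG hinf (hη z)
  obtain ⟨t, htf, ht⟩ := exists_finset_eventually_wtake_eq_of_not_restrictTrivial f N
  filter_upwards [ht, (eventually_all_finset t).2 fun z _ => eventually_ge_atTop (N z)]
    with n hcover hn
  have hsub : singularWords f Γ n ⊆
      ⋃ z ∈ t, wtake n '' {x ∈ Γ | wtake (N z) x = wtake (N z) z} := by
    rintro _ ⟨⟨x, hx, rfl⟩, hxf⟩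
    obtain ⟨z, hz, hxz⟩ := hcover x hxf
    exact Set.mem_iUnion₂.2 ⟨z, hz, x, ⟨hx, hxz⟩, rfl⟩
  rw [Real.norm_natCast, Real.norm_natCast]
  calc ((singularWords f Γ n).ncard : ℝ)
      ≤ ∑ z ∈ t, ((wtake n '' {x ∈ Γ | wtake (N z) x = wtake (N z) z}).ncard : ℝ) := by
        exact_mod_cast (Set.ncard_le_ncard hsub).trans (Finset.set_ncard_biUnion_le _ _)
    _ ≤ ∑ z ∈ t, η z * (wtake n '' Γ).ncard :=
        Finset.sum_le_sum fun z hz => hN z n (hn z hz) _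
    _ = (∑ z ∈ t, η z) * (wtake n '' Γ).ncard := (Finset.sum_mul _ _ _).symm
    _ ≤ δ * (wtake n '' Γ).ncard :=
        mul_le_mul_of_nonneg_right (hηδ t htf) (Nat.cast_nonneg _)

end Density

section Folner

variable {X : Type*} {G : Subgroup (Equiv.Perm (ℕ → X))} {S : Finset (Equiv.Perm (ℕ → X))}
  {Γ : Set (ℕ → X)} {n : ℕ} {ε : ℝ}

lemma exists_ncard_fiber_lt {α β κ : Type*} {A : Set α} (hA : A.Finite) {B : Set β}
    (hB : B.Finite) {r : β → α} (hr : Set.MapsTo r B A) (q : α → κ)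
    (h : (B.ncard : ℝ) < ε * A.ncard) :
    ∃ a ∈ A, ({b ∈ B | q (r b) = q a}.ncard : ℝ) < ε * {a' ∈ A | q a' = q a}.ncard := by
  classical
  lift A to Finset α using hA
  lift B to Finset β using hB
  obtain ⟨_, hk, hlt⟩ : ∃ k ∈ A.image q,
      ((B.filter fun b => q (r b) = k).card : ℝ) < ε * (A.filter fun a => q a = k).card := by
    refine Finset.exists_lt_of_sum_lt ?_
    rw [← Finset.mul_sum, ← Nat.cast_sum, ← Nat.cast_sum,
      ← Finset.card_eq_sum_card_fiberwise fun a ha => Finset.mem_image_of_mem q ha,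
      ← Finset.card_eq_sum_card_fiberwise fun b hb => Finset.mem_image_of_mem q (hr hb)]
    simpa only [Set.ncard_coe_finset] using h
  obtain ⟨a, ha, rfl⟩ := Finset.mem_image.1 hk
  refine ⟨a, ha, ?_⟩
  simpa only [← Set.ncard_coe_finset, Finset.coe_filter, Finset.mem_coe] using hlt

/-- The edges of the Schreier graph of the permutations in `S` that lead out of `F`. -/
def schreierBoundary {α : Type*} (S : Finset (Equiv.Perm α)) (F : Set α) :
    Set (Equiv.Perm α × α) :=
  {p | p.1 ∈ S ∧ p.2 ∈ F ∧ p.1 p.2 ∉ F}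

/-- The pairs of some `s ∈ S` and a beginning of length `n` of a point of `Γ` at which `s` has a
nontrivial restriction. -/
def singularEdges (S : Finset (Equiv.Perm (ℕ → X))) (Γ : Set (ℕ → X)) (n : ℕ) :
    Set (Equiv.Perm (ℕ → X) × (Fin n → X)) :=
  {p | p.1 ∈ S ∧ p.2 ∈ singularWords p.1 Γ n}

lemma finite_singularEdges [Finite X] : (singularEdges S Γ n).Finite :=
  (S.finite_toSet.prod Set.finite_univ).subset fun _ hp => ⟨hp.1, Set.mem_univ _⟩

lemma ncard_singularEdges_le [Finite X] :
    (singularEdges S Γ n).ncard ≤ ∑ s ∈ S, (singularWords s Γ n).ncard := by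
  have hunion : singularEdges S Γ n = ⋃ s ∈ S, Prod.mk s '' singularWords s Γ n := by
    ext ⟨s, v⟩
    simp [singularEdges, and_comm]
  rw [hunion]
  exact (Finset.set_ncard_biUnion_le _ _).trans
    (Finset.sum_le_sum fun s _ => Set.ncard_image_le)

lemma eventually_ncard_singularEdges_orbit_lt [Finite X] (hG : G ≤ treeAut X)
    (hS : ∀ s ∈ S, (singularSet s).Countable) {w : ℕ → X}
    (hinf : (MulAction.orbit G w).Infinite) (hε : 0 < ε) :
    ∀ᶠ n in atTop, ((singularEdges S (MulAction.orbit G w) n).ncard : ℝ) <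
      ε * (wtake n '' MulAction.orbit G w).ncard := by
  have hlittle := IsLittleO.fun_sum fun s hs =>
    isLittleO_ncard_singularWords_orbit hG hinf (hS s hs)
  filter_upwards [hlittle.def (half_pos hε)] with n hn
  have hpos : 0 < ((wtake n '' MulAction.orbit G w).ncard : ℝ) := by
    exact_mod_cast (Set.ncard_pos (Set.toFinite _)).2 ((MulAction.nonempty_orbit w).image _)
  rw [← Nat.cast_sum, Real.norm_natCast, Real.norm_natCast] at hn
  calc ((singularEdges S (MulAction.orbit G w) n).ncard : ℝ)
      ≤ ((∑ s ∈ S, (singularWords s (MulAction.orbit G w) n).ncard : ℕ) : ℝ) := by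
        exact_mod_cast ncard_singularEdges_le
    _ ≤ ε / 2 * (wtake n '' MulAction.orbit G w).ncard := hn
    _ < ε * (wtake n '' MulAction.orbit G w).ncard :=
        mul_lt_mul_of_pos_right (half_lt_self hε) hpos

lemma RestrictTrivial.preimage_wappend_wordMap {s : Equiv.Perm (ℕ → X)} (hs : IsTreeAut s)
    (hsΓ : s ⁻¹' Γ = Γ) {v : Fin n → X} (h : RestrictTrivial s v) :
    wappend (wordMap s v) ⁻¹' Γ = wappend v ⁻¹' Γ := by
  ext a
  conv_rhs => rw [← hsΓ]
  simp only [Set.mem_preimage, h.apply_wappend hs]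

lemma schreierBoundary_image_wappend_subset (hS : ∀ s ∈ S, IsTreeAut s) {C : Set (Fin n → X)}
    (hC : ∀ s ∈ S, ∀ v ∈ C, RestrictTrivial s v → wordMap s v ∈ C) (a : ℕ → X) :
    schreierBoundary S ((wappend · a) '' C) ⊆
      Prod.map id (wappend · a) '' {p | p.1 ∈ S ∧ p.2 ∈ C ∧ ¬ RestrictTrivial p.1 p.2} := by
  rintro ⟨s, _⟩ ⟨hs, ⟨v, hv, rfl⟩, hout⟩
  refine ⟨(s, v), ⟨hs, hv, fun htriv => hout ?_⟩, rfl⟩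
  exact ⟨wordMap s v, hC s hs v hv htriv, (htriv.apply_wappend (hS s hs) a).symm⟩

/-- Group the beginnings `v` of points of `Γ` by the set of tails `a` with `v·a ∈ Γ`. An edge with
trivial restriction does not leave its class, some class has relatively few other edges, and
appending to the words of this class a common tail `a` embeds it into `Γ`. -/
lemma exists_ncard_schreierBoundary_lt_of_singularEdges [Finite X]
    (hS : ∀ s ∈ S, IsTreeAut s) (hSΓ : ∀ s ∈ S, s ⁻¹' Γ = Γ)
    (h : ((singularEdges S Γ n).ncard : ℝ) < ε * (wtake n '' Γ).ncard) :
    ∃ F ⊆ Γ, F.Finite ∧ F.Nonempty ∧ ((schreierBoundary S F).ncard : ℝ) < ε * F.ncard := by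
  obtain ⟨_, ⟨x, hx, rfl⟩, hlt⟩ := exists_ncard_fiber_lt (Set.toFinite _) finite_singularEdges
    (fun p hp => hp.2.1) (fun v => wappend v ⁻¹' Γ) h
  set C := {v ∈ wtake n '' Γ | wappend v ⁻¹' Γ = wappend (wtake n x) ⁻¹' Γ}
  set a := wdrop n x
  have haΓ {v : Fin n → X} (hv : wappend v ⁻¹' Γ = wappend (wtake n x) ⁻¹' Γ) :
      wappend v a ∈ Γ :=
    hv.ge (by rwa [Set.mem_preimage, wappend_wtake_wdrop])
  have hC : ∀ s ∈ S, ∀ v ∈ C, RestrictTrivial s v → wordMap s v ∈ C := by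
    intro s hs v hv htriv
    have htails := (htriv.preimage_wappend_wordMap (hS s hs) (hSΓ s hs)).trans hv.2
    exact ⟨⟨_, haΓ htails, wtake_wappend _ a⟩, htails⟩
  have hinj : Function.Injective fun v : Fin n → X => wappend v a :=
    fun _ _ h => (wappend_inj.1 h).1
  have hedges : {p | p.1 ∈ S ∧ p.2 ∈ C ∧ ¬ RestrictTrivial p.1 p.2} ⊆
      {p ∈ singularEdges S Γ n | wappend p.2 ⁻¹' Γ = wappend (wtake n x) ⁻¹' Γ} :=
    fun p hp => ⟨⟨hp.1, hp.2.1.1, hp.2.2⟩, hp.2.1.2⟩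
  have hfin := finite_singularEdges.subset (hedges.trans (Set.sep_subset _ _))
  refine ⟨(wappend · a) '' C, Set.image_subset_iff.2 fun v hv => haΓ hv.2,
    C.toFinite.image _, ⟨_, wtake n x, ⟨⟨x, hx, rfl⟩, rfl⟩, rfl⟩, ?_⟩
  rw [Set.ncard_image_of_injective _ hinj]
  refine lt_of_le_of_lt ?_ hlt
  exact_mod_cast (Set.ncard_le_ncard (schreierBoundary_image_wappend_subset hS hC a)
    (hfin.image _)).trans ((Set.ncard_image_le hfin).trans
      (Set.ncard_le_ncard hedges (finite_singularEdges.subset (Set.sep_subset _ _))))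

lemma ncard_schreierBoundary_lt_of_preimage_eq {α : Type*} {S : Finset (Equiv.Perm α)}
    {F : Set α} (hSF : ∀ s ∈ S, s ⁻¹' F = F) (hfin : F.Finite) (hne : F.Nonempty)
    (hε : 0 < ε) : ((schreierBoundary S F).ncard : ℝ) < ε * F.ncard := by
  have hempty : schreierBoundary S F = ∅ :=
    Set.eq_empty_of_forall_notMem fun p hp => hp.2.2 ((hSF p.1 hp.1).ge hp.2.1)
  have hpos : 0 < F.ncard := (Set.ncard_pos hfin).2 hne
  rw [hempty, Set.ncard_empty, Nat.cast_zero]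
  positivity

lemma preimage_orbit_eq_of_mem {α : Type*} {G : Subgroup (Equiv.Perm α)} {g : Equiv.Perm α}
    (hg : g ∈ G) (x : α) : g ⁻¹' MulAction.orbit G x = MulAction.orbit G x := by
  ext y
  refine ⟨fun hy => ?_, MulAction.mem_orbit_of_mem_orbit (⟨g, hg⟩ : G)⟩
  simpa [Subgroup.smul_def] using MulAction.mem_orbit_of_mem_orbit (⟨g, hg⟩⁻¹ : G) hy

end Folner

theorem stmt_13_general {X : Type*} [Finite X] {G : Subgroup (Equiv.Perm (ℕ → X))}
    (hG : G ≤ treeAut X) {S : Finset (Equiv.Perm (ℕ → X))} (hSG : ∀ s ∈ S, s ∈ G)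
    (hS : ∀ s ∈ S, (singularSet s).Countable) (w : ℕ → X) {ε : ℝ} (hε : 0 < ε) :
    ∃ F : Set (ℕ → X), F.Finite ∧ F.Nonempty ∧ (∀ x ∈ F, ∃ g ∈ G, g w = x) ∧
      ((schreierBoundary S F).ncard : ℝ) < ε * F.ncard := by
  have hinv : ∀ s ∈ S, s ⁻¹' MulAction.orbit G w = MulAction.orbit G w :=
    fun s hs => preimage_orbit_eq_of_mem (hSG s hs) w
  obtain ⟨F, hFΓ, hfin, hne, hlt⟩ : ∃ F ⊆ MulAction.orbit G w, F.Finite ∧ F.Nonempty ∧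
      ((schreierBoundary S F).ncard : ℝ) < ε * F.ncard := by
    by_cases hfin : (MulAction.orbit G w).Finite
    · exact ⟨_, subset_rfl, hfin, MulAction.nonempty_orbit w,
        ncard_schreierBoundary_lt_of_preimage_eq hinv hfin (MulAction.nonempty_orbit w) hε⟩
    · obtain ⟨n, hn⟩ := (eventually_ncard_singularEdges_orbit_lt hG hS hfin hε).exists
      exact exists_ncard_schreierBoundary_lt_of_singularEdges (fun s hs => hG (hSG s hs)) hinv hn
  exact ⟨F, hfin, hne, fun x hx => by simpa [MulAction.mem_orbit_iff] using hFΓ hx, hlt⟩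

/-- **Corollary `cor:polyamenablegraphs`.** Let `X` be a finite set,
`d ≥ -1`, and `G ≤ P_d(X)` a finitely generated subgroup (generated by the finite
symmetric set `S`). Then every connected component of the Schreier graph of the action of
`(G, S)` on `X^ω` is amenable: for every `w ∈ X^ω` and `ε > 0` there is a finite nonempty
Følner set `Fs` inside the component (= the `G`-orbit) of `w` whose set of outgoing edges
`(s, x)`, `s ∈ S`, `x ∈ Fs`, `s x ∉ Fs` has fewer than `ε·|Fs|` elements. -/
theorem stmt_13 (X : Type*) [Fintype X] [Nonempty X] (d : ℤ) (hd : -1 ≤ d)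
    (G : Subgroup (Equiv.Perm (ℕ → X))) (hGP : ∀ g ∈ G, MemP d g)
    (S : Finset (Equiv.Perm (ℕ → X))) (hSG : ∀ s ∈ S, s ∈ G)
    (hSsymm : ∀ s ∈ S, s⁻¹ ∈ S)
    (hSgen : Subgroup.closure (S : Set (Equiv.Perm (ℕ → X))) = G)
    (w : ℕ → X) (ε : ℝ) (hε : 0 < ε) :
    ∃ Fs : Set (ℕ → X), Fs.Finite ∧ Fs.Nonempty ∧
      (∀ x ∈ Fs, ∃ g ∈ G, g w = x) ∧
      (({p : Equiv.Perm (ℕ → X) × (ℕ → X) |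
          p.1 ∈ S ∧ p.2 ∈ Fs ∧ p.1 p.2 ∉ Fs}.ncard : ℝ) < ε * Fs.ncard) :=
  stmt_13_general (fun g hg => (hGP g hg).1) hSG
    (fun s hs => (hGP s (hSG s hs)).countable_singularSet) w hε
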